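/- arXiv:2010.10514 — 7 statements merged into one kernel-verified Lean document; each statement's English description precedes it below -/
import Mathlib

section
/- A pair (f, τ), with f = {f_n}_n a sequence in X* and τ = {τ_n}_n a sequence in X, is a p-ASF for X if and only if there exist bounded linear operators U : X → ℓ^p(ℕ) and V : ℓ^p(ℕ) → X such that V ∘ U : X → X is bounded invertible and f_n = h_n ∘ U and τ_n = V e_n for all n ∈ ℕ. -/
open scoped ENNReal

/-- A p-approximate Schauder frame (p-ASF) for a Banach space `X`:
functionals `f`, vectors `τ`, an invertible frame operator `S` with
`S x = ∑ f n x • τ n`, a bounded analysis operator `θf` into `ℓ^p(ℕ)`,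
and a bounded synthesis operator `θτ` from `ℓ^p(ℕ)`. -/
structure pASF (p : ℝ≥0∞) [Fact (1 ≤ p)] (X : Type*) [NormedAddCommGroup X]
    [NormedSpace ℝ X] where
  f : ℕ → X →L[ℝ] ℝ
  τ : ℕ → X
  S : X ≃L[ℝ] X
  hS : ∀ x : X, HasSum (fun n => f n x • τ n) (S x)
  θf : X →L[ℝ] lp (fun _ : ℕ => ℝ) p
  hθf : ∀ (x : X) (n : ℕ), (θf x : ℕ → ℝ) n = f n x
  θτ : lp (fun _ : ℕ => ℝ) p →L[ℝ] X
  hθτ : ∀ a : lp (fun _ : ℕ => ℝ) p, HasSum (fun n => (a : ℕ → ℝ) n • τ n) (θτ a)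

/-!
For `p < ∞` every `a` in `ℓ^p` is the unconditional sum `∑ a i • e i`. Hence a bounded `V` on `ℓ^p`
is the synthesis operator of `τ` exactly when `τ i = V (e i)`, and then `∑ f i x • τ i` is the
synthesis of the coefficients of `x`, so the frame operator is synthesis composed with analysis.
-/

section

variable {𝕜 ι X : Type*} [NormedField 𝕜] [AddCommGroup X] [Module 𝕜 X] [TopologicalSpace X]
  {p : ℝ≥0∞}

theorem hasSum_lp_single_smul [DecidableEq ι] (τ : ι → X) (i : ι) :
    HasSum (fun j => (lp.single p i 1 : lp (fun _ : ι => 𝕜) p) j • τ j) (τ i) := by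
  convert hasSum_single i fun j hj => ?_
  · rw [lp.single_apply_self, one_smul]
  · rw [lp.single_apply_ne p i _ hj, zero_smul]

variable [Fact (1 ≤ p)]

/-- `S`, `θf` and `θτ` are the frame, analysis and synthesis operators of the pair `(f, τ)`.
As in `pASF`, series converge unconditionally; invertibility of `S` is not included. -/
structure AreFrameOperators (f : ι → X →L[𝕜] 𝕜) (τ : ι → X) (S : X →L[𝕜] X)
    (θf : X →L[𝕜] lp (fun _ : ι => 𝕜) p) (θτ : lp (fun _ : ι => 𝕜) p →L[𝕜] X) : Prop where
  hasSum_frame : ∀ x, HasSum (fun i => f i x • τ i) (S x)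
  analysis_apply : ∀ x i, θf x i = f i x
  hasSum_synthesis : ∀ a : lp (fun _ : ι => 𝕜) p, HasSum (fun i => a i • τ i) (θτ a)

theorem hasSum_smul_map_lp_single [DecidableEq ι] (hp : p ≠ ∞)
    (V : lp (fun _ : ι => 𝕜) p →L[𝕜] X) (a : lp (fun _ : ι => 𝕜) p) :
    HasSum (fun i => a i • V (lp.single p i 1)) (V a) := by
  simpa only [← map_smul, ← lp.single_smul, smul_eq_mul, mul_one] using
    (lp.hasSum_single hp a).mapL V

theorem forall_hasSum_smul_iff_eq_map_lp_single [T2Space X] [DecidableEq ι] (hp : p ≠ ∞) {τ : ι → X}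
    {V : lp (fun _ : ι => 𝕜) p →L[𝕜] X} :
    (∀ a : lp (fun _ : ι => 𝕜) p, HasSum (fun i => a i • τ i) (V a)) ↔
      ∀ i, τ i = V (lp.single p i 1) := by
  refine ⟨fun hV i => (hasSum_lp_single_smul τ i).unique (hV _), fun hτ a => ?_⟩
  simpa only [hτ] using hasSum_smul_map_lp_single hp V a

theorem forall_hasSum_frame_iff_eq_comp [T2Space X] {f : ι → X →L[𝕜] 𝕜} {τ : ι → X}
    {S : X →L[𝕜] X} {U : X →L[𝕜] lp (fun _ : ι => 𝕜) p} {V : lp (fun _ : ι => 𝕜) p →L[𝕜] X}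
    (hU : ∀ i x, f i x = U x i)
    (hV : ∀ a : lp (fun _ : ι => 𝕜) p, HasSum (fun i => a i • τ i) (V a)) :
    (∀ x, HasSum (fun i => f i x • τ i) (S x)) ↔ S = V.comp U := by
  have hVU (x : X) : HasSum (fun i => f i x • τ i) (V.comp U x) := by
    simpa only [hU, ContinuousLinearMap.comp_apply] using hV (U x)
  exact ⟨fun hS => ContinuousLinearMap.ext fun x => (hS x).unique (hVU x), fun h => h ▸ hVU⟩

theorem areFrameOperators_iff [T2Space X] [DecidableEq ι] (hp : p ≠ ∞) {f : ι → X →L[𝕜] 𝕜}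
    {τ : ι → X} {S : X →L[𝕜] X} {U : X →L[𝕜] lp (fun _ : ι => 𝕜) p}
    {V : lp (fun _ : ι => 𝕜) p →L[𝕜] X} :
    AreFrameOperators f τ S U V ↔
      S = V.comp U ∧ (∀ i x, f i x = U x i) ∧ ∀ i, τ i = V (lp.single p i 1) := by
  rw [← forall_hasSum_smul_iff_eq_map_lp_single hp]
  constructor
  · rintro ⟨hS, hU, hV⟩
    have hU' : ∀ i x, f i x = U x i := fun i x => (hU x i).symm
    exact ⟨(forall_hasSum_frame_iff_eq_comp hU' hV).1 hS, hU', hV⟩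
  · rintro ⟨hS, hU, hV⟩
    exact ⟨(forall_hasSum_frame_iff_eq_comp hU hV).2 hS, fun x i => (hU i x).symm, hV⟩

theorem stmt_3_general [T2Space X] [DecidableEq ι] (hp : p ≠ ∞) (f : ι → X →L[𝕜] 𝕜) (τ : ι → X) :
    (∃ (θf : X →L[𝕜] lp (fun _ : ι => 𝕜) p) (θτ : lp (fun _ : ι => 𝕜) p →L[𝕜] X) (S : X ≃L[𝕜] X),
        AreFrameOperators f τ (S : X →L[𝕜] X) θf θτ) ↔
      ∃ (U : X →L[𝕜] lp (fun _ : ι => 𝕜) p) (V : lp (fun _ : ι => 𝕜) p →L[𝕜] X) (W : X ≃L[𝕜] X),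
        (W : X →L[𝕜] X) = V.comp U ∧
        (∀ i x, f i x = U x i) ∧
        ∀ i, τ i = V (lp.single p i 1) := by
  simp only [areFrameOperators_iff hp]

end

theorem exists_pASF_iff_exists_areFrameOperators {X : Type*} [NormedAddCommGroup X]
    [NormedSpace ℝ X] {p : ℝ≥0∞} [Fact (1 ≤ p)] {f : ℕ → X →L[ℝ] ℝ} {τ : ℕ → X} :
    (∃ F : pASF p X, F.f = f ∧ F.τ = τ) ↔
      ∃ (θf : X →L[ℝ] lp (fun _ : ℕ => ℝ) p) (θτ : lp (fun _ : ℕ => ℝ) p →L[ℝ] X)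
        (S : X ≃L[ℝ] X), AreFrameOperators f τ (S : X →L[ℝ] X) θf θτ := by
  constructor
  · rintro ⟨F, rfl, rfl⟩
    exact ⟨F.θf, F.θτ, F.S, F.hS, F.hθf, F.hθτ⟩
  · rintro ⟨θf, θτ, S, hS, hθf, hθτ⟩
    exact ⟨⟨f, τ, S, hS, θf, hθf, θτ, hθτ⟩, rfl, rfl⟩

/-- a pair `(f, τ)` is a p-ASF iff `f n = h n ∘ U`, `τ n = V e n`
for bounded operators `U : X → ℓ^p`, `V : ℓ^p → X` with `V ∘ U` bounded invertible.
Here `e n = lp.single p n 1` and `h n` is the n-th coordinate functional. -/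
theorem stmt_3 {X : Type*} [NormedAddCommGroup X] [NormedSpace ℝ X] [CompleteSpace X]
    (p : ℝ≥0∞) [Fact (1 ≤ p)] (hp : p ≠ ∞) (f : ℕ → X →L[ℝ] ℝ) (τ : ℕ → X) :
    (∃ F : pASF p X, F.f = f ∧ F.τ = τ) ↔
    ∃ (U : X →L[ℝ] lp (fun _ : ℕ => ℝ) p) (V : lp (fun _ : ℕ => ℝ) p →L[ℝ] X)
      (W : X ≃L[ℝ] X),
        (W : X →L[ℝ] X) = V.comp U ∧
        (∀ (n : ℕ) (x : X), f n x = (U x : ℕ → ℝ) n) ∧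
        (∀ n : ℕ, τ n = V (lp.single p n 1)) :=
  exists_pASF_iff_exists_areFrameOperators.trans (stmt_3_general hp f τ)
end

section
/- Let (f, τ) be a p-ASF for X. Suppose {τ_n}_n is a Schauder basis for X (every x ∈ X has a unique norm-convergent expansion x = ∑_{n=1}^∞ a_n τ_n with scalars a_n) and f_k(τ_n) = δ_{k,n} for all k, n ∈ ℕ. Then (f, τ) has a unique dual: if (g, ω) and (u, ρ) are both dual p-ASFs of (f, τ), then g_n = u_n and ω_n = ρ_n for all n ∈ ℕ. -/
open scoped ENNReal

/-- `G` is a dual p-ASF of `F`: `x = ∑ G.f n x • F.τ n = ∑ F.f n x • G.τ n`. -/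
def pASF.IsDual {p : ℝ≥0∞} [Fact (1 ≤ p)] {X : Type*} [NormedAddCommGroup X]
    [NormedSpace ℝ X] (F G : pASF p X) : Prop :=
  ∀ x : X, HasSum (fun n => G.f n x • F.τ n) x ∧ HasSum (fun n => F.f n x • G.τ n) x

section Biorthogonal

variable {ι 𝕜 X : Type*} [DecidableEq ι] [Semiring 𝕜] [AddCommMonoid X] [Module 𝕜 X]
  [TopologicalSpace X] {L : SummationFilter ι} [L.LeAtTop] [L.NeBot] {τ : ι → X}

theorem apply_eq_of_hasSum_smul_of_biorthogonal [TopologicalSpace 𝕜] [T2Space 𝕜]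
    {f : ι → X →L[𝕜] 𝕜} (hfτ : ∀ k n, f k (τ n) = if k = n then 1 else 0)
    {a : ι → 𝕜} {x : X} (hx : HasSum (fun n => a n • τ n) x L) (k : ι) : f k x = a k := by
  have h_map : HasSum (fun n => f k (a n • τ n)) (f k x) L := hx.mapL (f k)
  have h_single : HasSum (fun n => f k (a n • τ n)) (f k (a k • τ k)) L :=
    hasSum_single k (fun n hn => by simp [hfτ, hn.symm]) L
  calc
    f k x = f k (a k • τ k) := h_map.unique h_single
    _ = a k := by simp [hfτ]

theorem eq_of_hasSum_apply_smul_of_biorthogonal [T2Space X]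
    {f : ι → X → 𝕜} (hfτ : ∀ k n, f k (τ n) = if k = n then 1 else 0)
    {ω : ι → X} {n : ι} {y : X} (hy : HasSum (fun k => f k (τ n) • ω k) y L) : y = ω n := by
  have h_single : HasSum (fun k => f k (τ n) • ω k) (f n (τ n) • ω n) L :=
    hasSum_single n (fun k hk => by simp [hfτ, hk]) L
  calc
    y = f n (τ n) • ω n := hy.unique h_single
    _ = ω n := by simp [hfτ]

/-- `L = .conditional ℕ` is ordinary convergence of partial sums; `pASF` uses
`L = .unconditional ℕ`. -/
theorem stmt_7_general [TopologicalSpace 𝕜] [T2Space 𝕜] [T2Space X]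
    {f g : ι → X →L[𝕜] 𝕜} {ω : ι → X} (hfτ : ∀ k n, f k (τ n) = if k = n then 1 else 0)
    (hgτ : ∀ x, HasSum (fun n => g n x • τ n) x L)
    (hfω : ∀ x, HasSum (fun n => f n x • ω n) x L) : g = f ∧ ω = τ := by
  constructor
  · ext n x
    exact (apply_eq_of_hasSum_smul_of_biorthogonal hfτ (hgτ x) n).symm
  · ext n
    exact (eq_of_hasSum_apply_smul_of_biorthogonal hfτ (hfω (τ n))).symm

end Biorthogonal

/-- if `τ` is a Schauder basis of `X` and `f k (τ n) = δ_{k,n}`,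
then the p-ASF `(f, τ)` has a unique dual. -/
theorem stmt_7 {X : Type*} [NormedAddCommGroup X] [NormedSpace ℝ X] [CompleteSpace X]
    (p : ℝ≥0∞) [Fact (1 ≤ p)] (hp : p ≠ ∞) (F : pASF p X)
    (hbasis : ∀ x : X, ∃! a : ℕ → ℝ, HasSum (fun n => a n • F.τ n) x)
    (hdelta : ∀ k n : ℕ, F.f k (F.τ n) = if k = n then 1 else 0)
    (G H : pASF p X) (hG : F.IsDual G) (hH : F.IsDual H) :
    (∀ n, G.f n = H.f n) ∧ (∀ n, G.τ n = H.τ n) := by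
  obtain ⟨hGf, hGτ⟩ := stmt_7_general hdelta (fun x => (hG x).1) (fun x => (hG x).2)
  obtain ⟨hHf, hHτ⟩ := stmt_7_general hdelta (fun x => (hH x).1) (fun x => (hH x).2)
  exact ⟨congrFun (hGf.trans hHf.symm), congrFun (hGτ.trans hHτ.symm)⟩
end

section
/- Let (f, τ) be a p-ASF for X. Then a p-ASF (g, ω) for X is a dual of (f, τ) if and only if g_n = h_n ∘ U and ω_n = V e_n for all n ∈ ℕ, where U : X → ℓ^p(ℕ) is a bounded right-inverse of θ_τ (i.e., θ_τ ∘ U = I_X), V : ℓ^p(ℕ) → X is a bounded left-inverse of θ_f (i.e., V ∘ θ_f = I_X), and V ∘ U : X → X is bounded invertible. -/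
open scoped ENNReal

/-!
Uniqueness of sums identifies the two duality conditions with the operator identities
`θ_τ ∘ θ_g = id` and `θ_ω ∘ θ_f = id`. Coordinates determine an element of `ℓ^p`, so
`g n = h n ∘ U` forces `U = θ_g`; the unit vectors span a dense subspace of `ℓ^p` when `p < ∞`, so
`ω n = V (e n)` forces `V = θ_ω`. Then `V ∘ U = θ_ω ∘ θ_g` is the frame operator of `(g, ω)`, which
is invertible.
-/

theorem continuousLinearMap_lp_ext_single_one {ι R E : Type*} [DecidableEq ι]
    [NormedRing R] [AddCommMonoid E] [Module R E] [TopologicalSpace E] [T2Space E]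
    {p : ℝ≥0∞} [Fact (1 ≤ p)] (hp : p ≠ ∞) {T T' : lp (fun _ : ι => R) p →L[R] E}
    (h : ∀ i, T (lp.single p i 1) = T' (lp.single p i 1)) : T = T' :=
  lp.ext_continuousLinearMap hp fun i => ContinuousLinearMap.ext_ring (h i)

namespace pASF

variable {p : ℝ≥0∞} [Fact (1 ≤ p)] {X : Type*} [NormedAddCommGroup X] [NormedSpace ℝ X]

theorem θτ_single_one (F : pASF p X) (n : ℕ) : F.θτ (lp.single p n 1) = F.τ n := by
  have expansion := F.hθτ (lp.single p n 1)
  have vanishes_off_n : ∀ m ≠ n,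
      (lp.single p n 1 : lp (fun _ : ℕ => ℝ) p) m • F.τ m = 0 := fun m hm => by
    rw [lp.single_apply_ne p n _ hm, zero_smul]
  have value := expansion.unique (hasSum_single n vanishes_off_n)
  rwa [lp.single_apply_self, one_smul] at value

theorem hasSum_f_smul_τ (F G : pASF p X) (x : X) :
    HasSum (fun n => G.f n x • F.τ n) (F.θτ (G.θf x)) := by
  simpa only [G.hθf] using F.hθτ (G.θf x)

theorem S_eq_θτ_comp_θf (F : pASF p X) : (F.S : X →L[ℝ] X) = F.θτ.comp F.θf :=
  ContinuousLinearMap.ext fun x => (F.hS x).unique (F.hasSum_f_smul_τ F x)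

theorem forall_hasSum_f_smul_τ_iff (F G : pASF p X) :
    (∀ x, HasSum (fun n => G.f n x • F.τ n) x) ↔
      F.θτ.comp G.θf = ContinuousLinearMap.id ℝ X := by
  simp only [ContinuousLinearMap.ext_iff, ContinuousLinearMap.comp_apply,
    ContinuousLinearMap.id_apply]
  refine forall_congr' fun x => ?_
  have expansion := F.hasSum_f_smul_τ G x
  exact ⟨expansion.unique, fun h => by rwa [h] at expansion⟩

theorem isDual_iff_comp_eq_id (F G : pASF p X) :
    F.IsDual G ↔ F.θτ.comp G.θf = ContinuousLinearMap.id ℝ X ∧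
      G.θτ.comp F.θf = ContinuousLinearMap.id ℝ X := by
  rw [IsDual, forall_and, forall_hasSum_f_smul_τ_iff, forall_hasSum_f_smul_τ_iff]

theorem eq_θf_of_forall_coord (F : pASF p X) {U : X →L[ℝ] lp (fun _ : ℕ => ℝ) p}
    (hU : ∀ n x, F.f n x = U x n) : U = F.θf := by
  ext x n
  rw [← hU, F.hθf]

theorem eq_θτ_of_forall_single_one (hp : p ≠ ∞) (F : pASF p X)
    {V : lp (fun _ : ℕ => ℝ) p →L[ℝ] X} (hV : ∀ n, F.τ n = V (lp.single p n 1)) : V = F.θτ :=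
  continuousLinearMap_lp_ext_single_one hp fun n => by rw [F.θτ_single_one, hV]

end pASF

theorem stmt_9_general {X : Type*} [NormedAddCommGroup X] [NormedSpace ℝ X]
    (p : ℝ≥0∞) [Fact (1 ≤ p)] (hp : p ≠ ∞) (F G : pASF p X) :
    F.IsDual G ↔
    ∃ (U : X →L[ℝ] lp (fun _ : ℕ => ℝ) p) (V : lp (fun _ : ℕ => ℝ) p →L[ℝ] X),
      F.θτ.comp U = ContinuousLinearMap.id ℝ X ∧
      V.comp F.θf = ContinuousLinearMap.id ℝ X ∧
      (∃ W : X ≃L[ℝ] X, (W : X →L[ℝ] X) = V.comp U) ∧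
      (∀ (n : ℕ) (x : X), G.f n x = (U x : ℕ → ℝ) n) ∧
      (∀ n : ℕ, G.τ n = V (lp.single p n 1)) := by
  rw [F.isDual_iff_comp_eq_id G]
  constructor
  · rintro ⟨right_inverse, left_inverse⟩
    exact ⟨G.θf, G.θτ, right_inverse, left_inverse, ⟨G.S, G.S_eq_θτ_comp_θf⟩,
      fun n x => (G.hθf x n).symm, fun n => (G.θτ_single_one n).symm⟩
  · rintro ⟨U, V, right_inverse, left_inverse, -, coord, single⟩
    obtain rfl := G.eq_θf_of_forall_coord coord
    obtain rfl := G.eq_θτ_of_forall_single_one hp single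
    exact ⟨right_inverse, left_inverse⟩

/-- a p-ASF `(g, ω)` is a dual of `(f, τ)` iff `g n = h n ∘ U` and
`ω n = V (e n)` where `U` is a bounded right-inverse of `θ_τ`, `V` is a bounded
left-inverse of `θ_f`, and `V ∘ U` is bounded invertible. -/
theorem stmt_9 {X : Type*} [NormedAddCommGroup X] [NormedSpace ℝ X] [CompleteSpace X]
    (p : ℝ≥0∞) [Fact (1 ≤ p)] (hp : p ≠ ∞) (F G : pASF p X) :
    F.IsDual G ↔
    ∃ (U : X →L[ℝ] lp (fun _ : ℕ => ℝ) p) (V : lp (fun _ : ℕ => ℝ) p →L[ℝ] X),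
      F.θτ.comp U = ContinuousLinearMap.id ℝ X ∧
      V.comp F.θf = ContinuousLinearMap.id ℝ X ∧
      (∃ W : X ≃L[ℝ] X, (W : X →L[ℝ] X) = V.comp U) ∧
      (∀ (n : ℕ) (x : X), G.f n x = (U x : ℕ → ℝ) n) ∧
      (∀ n : ℕ, G.τ n = V (lp.single p n 1)) :=
  stmt_9_general p hp F G
end

section
/- Let (f, τ) be a p-ASF for X. A bounded linear operator R : X → ℓ^p(ℕ) satisfies θ_τ ∘ R = I_X (i.e., R is a bounded right-inverse of θ_τ) if and only if R = θ_f ∘ S_{f,τ}^{-1} + (I_{ℓ^p(ℕ)} − θ_f ∘ S_{f,τ}^{-1} ∘ θ_τ) ∘ U for some bounded linear operator U : X → ℓ^p(ℕ). -/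
open scoped ENNReal

/-!
Since `θτ ∘ θf = S`, the operator `B = θf ∘ S⁻¹` is a right inverse of `A = θτ`. For any right
inverse `B` of `A`, the map `B ∘ T` is a particular solution of `A ∘ R = T`, and `id - B ∘ A` is a
projection onto the kernel of `A`, so the maps `(id - B ∘ A) ∘ U` are exactly the solutions of the
homogeneous equation. The theorem is the case `T = id`.
-/

section RightInverse

variable {𝕜 E F G : Type*} [Ring 𝕜]
  [AddCommGroup E] [TopologicalSpace E] [IsTopologicalAddGroup E] [Module 𝕜 E]
  [AddCommGroup F] [TopologicalSpace F] [Module 𝕜 F]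
  [AddCommMonoid G] [TopologicalSpace G] [Module 𝕜 G]
  {A : E →L[𝕜] F} {B : F →L[𝕜] E}

theorem comp_id_sub_comp_eq_zero_of_comp_eq_id (hAB : A.comp B = .id 𝕜 F) :
    A.comp (.id 𝕜 E - B.comp A) = 0 := by
  ext x
  have hABx : A (B (A x)) = A x := DFunLike.congr_fun hAB (A x)
  simp [hABx]

theorem comp_eq_iff_exists_eq_comp_add_of_comp_eq_id (hAB : A.comp B = .id 𝕜 F)
    {R : G →L[𝕜] E} {T : G →L[𝕜] F} :
    A.comp R = T ↔ ∃ U : G →L[𝕜] E, R = B.comp T + (.id 𝕜 E - B.comp A).comp U := by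
  constructor
  · rintro rfl
    refine ⟨R, ?_⟩
    ext x
    simp
  · rintro ⟨U, rfl⟩
    ext x
    have hABT : A (B (T x)) = T x := DFunLike.congr_fun hAB (T x)
    have hker : A (U x - B (A (U x))) = 0 :=
      DFunLike.congr_fun (comp_id_sub_comp_eq_zero_of_comp_eq_id hAB) (U x)
    simpa [hABT] using hker

end RightInverse

namespace pASF

variable {X : Type*} [NormedAddCommGroup X] [NormedSpace ℝ X] {p : ℝ≥0∞} [Fact (1 ≤ p)]

theorem θτ_comp_θf (F : pASF p X) : F.θτ.comp F.θf = (F.S : X →L[ℝ] X) := by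
  ext x
  have hsum : HasSum (fun n => F.f n x • F.τ n) (F.θτ (F.θf x)) := by
    simpa only [F.hθf] using F.hθτ (F.θf x)
  exact hsum.unique (F.hS x)

theorem θτ_comp_θf_comp_S_symm (F : pASF p X) :
    F.θτ.comp (F.θf.comp (F.S.symm : X →L[ℝ] X)) = .id ℝ X := by
  rw [← ContinuousLinearMap.comp_assoc, θτ_comp_θf, ContinuousLinearEquiv.coe_comp_coe_symm]

end pASF

theorem stmt_10_general {X : Type*} [NormedAddCommGroup X] [NormedSpace ℝ X]
    {p : ℝ≥0∞} [Fact (1 ≤ p)] (F : pASF p X) (R : X →L[ℝ] lp (fun _ : ℕ => ℝ) p) :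
    F.θτ.comp R = ContinuousLinearMap.id ℝ X ↔
    ∃ U : X →L[ℝ] lp (fun _ : ℕ => ℝ) p,
      R = F.θf.comp (F.S.symm : X →L[ℝ] X) +
        (ContinuousLinearMap.id ℝ (lp (fun _ : ℕ => ℝ) p) -
          F.θf.comp ((F.S.symm : X →L[ℝ] X).comp F.θτ)).comp U := by
  rw [comp_eq_iff_exists_eq_comp_add_of_comp_eq_id F.θτ_comp_θf_comp_S_symm,
    ContinuousLinearMap.comp_id, ContinuousLinearMap.comp_assoc]

/-- characterization of bounded right-inverses of `θ_τ`. -/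
theorem stmt_10 {X : Type*} [NormedAddCommGroup X] [NormedSpace ℝ X] [CompleteSpace X]
    (p : ℝ≥0∞) [Fact (1 ≤ p)] (hp : p ≠ ∞) (F : pASF p X)
    (R : X →L[ℝ] lp (fun _ : ℕ => ℝ) p) :
    F.θτ.comp R = ContinuousLinearMap.id ℝ X ↔
    ∃ U : X →L[ℝ] lp (fun _ : ℕ => ℝ) p,
      R = F.θf.comp (F.S.symm : X →L[ℝ] X) +
        (ContinuousLinearMap.id ℝ (lp (fun _ : ℕ => ℝ) p) -
          F.θf.comp ((F.S.symm : X →L[ℝ] X).comp F.θτ)).comp U :=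
  stmt_10_general F R
end

section
/- Let (f, τ) and (g, ω) be two p-ASFs for X, and set P_{f,τ} := θ_f ∘ S_{f,τ}^{-1} ∘ θ_τ and P_{g,ω} := θ_g ∘ S_{g,ω}^{-1} ∘ θ_ω. Then (f, τ) and (g, ω) are similar (i.e., there exist bounded invertible operators T_{f,g}, T_{τ,ω} : X → X with g_n = f_n ∘ T_{f,g} and ω_n = T_{τ,ω}τ_n for all n ∈ ℕ) if and only if P_{g,ω} = P_{f,τ}. -/
open scoped ENNReal

/-!
The operator `P = θ S⁻¹ σ` built from an analysis operator `θ`, a synthesis operator `σ` and the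
invertible frame operator `S = σ θ` satisfies `P θ = θ` and `σ P = σ`. If `θ' = θ T` and `σ' = U σ`,
then `S' = U S T`, and `T` and `U` cancel in `P'`. If conversely `P' = P`, then
`θ' = P θ' = θ (S⁻¹ σ θ')` and `σ' = σ' P = (σ' θ S⁻¹) σ`, and exchanging the roles of the two
frames inverts both factors. A p-ASF is determined by `θ` and `σ`: the functionals are the
coordinates of `θ` and the vectors are the images under `σ` of the unit vectors. Hence p-ASFs are
similar if and only if their operators are related by such `T` and `U`.
-/

/-- The operator-theoretic content of a frame for `X` with coefficient space `E`: an analysis and a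
synthesis operator whose composite, the frame operator, is invertible. The frame operator is kept as
data, as in `pASF`. -/
structure FactorableFrame (R E X : Type*) [Semiring R]
    [AddCommMonoid E] [TopologicalSpace E] [Module R E]
    [AddCommMonoid X] [TopologicalSpace X] [Module R X] where
  analysis : X →L[R] E
  synthesis : E →L[R] X
  frameOp : X ≃L[R] X
  synthesis_analysis : ∀ x, synthesis (analysis x) = frameOp x

namespace FactorableFrame

variable {R E X Y : Type*} [Semiring R]
  [AddCommMonoid E] [TopologicalSpace E] [Module R E]
  [AddCommMonoid X] [TopologicalSpace X] [Module R X]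
  [AddCommMonoid Y] [TopologicalSpace Y] [Module R Y]

/-- The idempotent `P = θ S⁻¹ σ` of the coefficient space attached to a frame; its range is the
range of the analysis operator and its kernel the kernel of the synthesis operator. -/
def proj (F : FactorableFrame R E X) : E →L[R] E :=
  F.analysis ∘L (F.frameOp.symm : X →L[R] X) ∘L F.synthesis

/-- Similarity of two frames with the same coefficient space. The underlying spaces may differ, so
the two intertwining equivalences go in opposite directions. -/
def Similar (F : FactorableFrame R E X) (G : FactorableFrame R E Y) : Prop :=
  ∃ (T : Y ≃L[R] X) (U : X ≃L[R] Y),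
    G.analysis = F.analysis ∘L (T : Y →L[R] X) ∧ G.synthesis = (U : X →L[R] Y) ∘L F.synthesis

variable (F : FactorableFrame R E X) (G : FactorableFrame R E Y)

lemma proj_apply (a : E) : F.proj a = F.analysis (F.frameOp.symm (F.synthesis a)) := rfl

lemma proj_analysis (x : X) : F.proj (F.analysis x) = F.analysis x := by
  rw [proj_apply, synthesis_analysis, ContinuousLinearEquiv.symm_apply_apply]

lemma synthesis_proj (a : E) : F.synthesis (F.proj a) = F.synthesis a := by
  rw [proj_apply, synthesis_analysis, ContinuousLinearEquiv.apply_symm_apply]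

variable {F G}

lemma Similar.proj_eq (h : F.Similar G) : G.proj = F.proj := by
  obtain ⟨T, U, hT, hU⟩ := h
  have frameOp_eq (y : Y) : G.frameOp y = U (F.frameOp (T y)) := by
    rw [← G.synthesis_analysis, ← F.synthesis_analysis, hT, hU]
    rfl
  ext1 a
  have frameOp_symm_eq :
      G.frameOp.symm (G.synthesis a) = T.symm (F.frameOp.symm (F.synthesis a)) := by
    rw [ContinuousLinearEquiv.symm_apply_eq, frameOp_eq, hU]
    simp
  rw [proj_apply, proj_apply, frameOp_symm_eq, hT]
  simp

lemma frameOp_symm_synthesis_proj_analysis (h : G.proj = F.proj) (x : X) :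
    F.frameOp.symm (F.synthesis (G.proj (F.analysis x))) = x := by
  rw [h, proj_analysis, synthesis_analysis, ContinuousLinearEquiv.symm_apply_apply]

lemma synthesis_proj_analysis_frameOp_symm (h : G.proj = F.proj) (x : X) :
    F.synthesis (G.proj (F.analysis (F.frameOp.symm x))) = x := by
  rw [h, proj_analysis, synthesis_analysis, ContinuousLinearEquiv.apply_symm_apply]

lemma exists_analysis_eq_comp_of_proj_eq (h : G.proj = F.proj) :
    ∃ T : Y ≃L[R] X, G.analysis = F.analysis ∘L (T : Y →L[R] X) := by
  refine ⟨.equivOfInverse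
    ((F.frameOp.symm : X →L[R] X) ∘L F.synthesis ∘L G.analysis)
    ((G.frameOp.symm : Y →L[R] Y) ∘L G.synthesis ∘L F.analysis)
    (frameOp_symm_synthesis_proj_analysis h.symm) (frameOp_symm_synthesis_proj_analysis h), ?_⟩
  ext1 y
  change G.analysis y = F.proj (G.analysis y)
  rw [← h, proj_analysis]

lemma exists_synthesis_eq_comp_of_proj_eq (h : G.proj = F.proj) :
    ∃ U : X ≃L[R] Y, G.synthesis = (U : X →L[R] Y) ∘L F.synthesis := by
  refine ⟨.equivOfInverse
    (G.synthesis ∘L F.analysis ∘L (F.frameOp.symm : X →L[R] X))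
    (F.synthesis ∘L G.analysis ∘L (G.frameOp.symm : Y →L[R] Y))
    (synthesis_proj_analysis_frameOp_symm h) (synthesis_proj_analysis_frameOp_symm h.symm), ?_⟩
  ext1 a
  change G.synthesis a = G.synthesis (F.proj a)
  rw [← h, synthesis_proj]

theorem similar_iff_proj_eq : F.Similar G ↔ G.proj = F.proj := by
  refine ⟨Similar.proj_eq, fun h => ?_⟩
  obtain ⟨T, hT⟩ := exists_analysis_eq_comp_of_proj_eq h
  obtain ⟨U, hU⟩ := exists_synthesis_eq_comp_of_proj_eq h
  exact ⟨T, U, hT, hU⟩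

end FactorableFrame

namespace pASF

variable {p : ℝ≥0∞} [Fact (1 ≤ p)] {X Y : Type*} [NormedAddCommGroup X] [NormedSpace ℝ X]
  [NormedAddCommGroup Y] [NormedSpace ℝ Y] (F : pASF p X) (G : pASF p Y)

lemma θτ_θf (x : X) : F.θτ (F.θf x) = F.S x := by
  have h := F.hθτ (F.θf x)
  simp only [F.hθf] at h
  exact h.unique (F.hS x)

lemma θτ_single (n : ℕ) : F.θτ (lp.single p n (1 : ℝ)) = F.τ n := by
  refine (F.hθτ _).unique ?_
  convert hasSum_single n fun m hm => ?_ using 1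
  · simp
  · simp [lp.single_apply, hm]

/-- The analysis, synthesis and frame operators of a p-ASF, forgetting the functionals and vectors
they come from. -/
def toFactorableFrame : FactorableFrame ℝ (lp (fun _ : ℕ => ℝ) p) X where
  analysis := F.θf
  synthesis := F.θτ
  frameOp := F.S
  synthesis_analysis := F.θτ_θf

variable {F G}

lemma θf_eq_comp_iff {T : Y →L[ℝ] X} :
    G.θf = F.θf ∘L T ↔ ∀ n, G.f n = F.f n ∘L T := by
  constructor
  · intro h n
    ext y
    rw [← G.hθf, h, ContinuousLinearMap.comp_apply, F.hθf, ContinuousLinearMap.comp_apply]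
  · intro h
    ext y n
    rw [G.hθf, h, ContinuousLinearMap.comp_apply, ContinuousLinearMap.comp_apply, F.hθf]

lemma θτ_eq_comp_iff {U : X →L[ℝ] Y} :
    G.θτ = U ∘L F.θτ ↔ ∀ n, G.τ n = U (F.τ n) := by
  constructor
  · intro h n
    rw [← G.θτ_single, h, ContinuousLinearMap.comp_apply, F.θτ_single]
  · intro h
    ext1 a
    refine (G.hθτ a).unique ?_
    simpa only [h, map_smul, ContinuousLinearMap.comp_apply] using (F.hθτ a).mapL U

lemma toFactorableFrame_similar_iff :
    F.toFactorableFrame.Similar G.toFactorableFrame ↔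
      ∃ (T : Y ≃L[ℝ] X) (U : X ≃L[ℝ] Y),
        (∀ n, G.f n = F.f n ∘L (T : Y →L[ℝ] X)) ∧ ∀ n, G.τ n = U (F.τ n) :=
  exists₂_congr fun _ _ => and_congr θf_eq_comp_iff θτ_eq_comp_iff

end pASF

theorem stmt_14_general {p : ℝ≥0∞} [Fact (1 ≤ p)] {X Y : Type*}
    [NormedAddCommGroup X] [NormedSpace ℝ X] [NormedAddCommGroup Y] [NormedSpace ℝ Y]
    (F : pASF p X) (G : pASF p Y) :
    (∃ (Tfg : Y ≃L[ℝ] X) (Tτω : X ≃L[ℝ] Y),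
        (∀ n, G.f n = (F.f n).comp (Tfg : Y →L[ℝ] X)) ∧
        (∀ n, G.τ n = Tτω (F.τ n))) ↔
    G.θf.comp ((G.S.symm : Y →L[ℝ] Y).comp G.θτ) =
      F.θf.comp ((F.S.symm : X →L[ℝ] X).comp F.θτ) :=
  pASF.toFactorableFrame_similar_iff.symm.trans FactorableFrame.similar_iff_proj_eq

/-- two p-ASFs are similar iff their projections
`P = θ_f ∘ S⁻¹ ∘ θ_τ` coincide. -/
theorem stmt_14 {X : Type*} [NormedAddCommGroup X] [NormedSpace ℝ X] [CompleteSpace X]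
    (p : ℝ≥0∞) [Fact (1 ≤ p)] (hp : p ≠ ∞) (F G : pASF p X) :
    (∃ Tfg Tτω : X ≃L[ℝ] X,
        (∀ n, G.f n = (F.f n).comp (Tfg : X →L[ℝ] X)) ∧
        (∀ n, G.τ n = Tτω (F.τ n))) ↔
    G.θf.comp ((G.S.symm : X →L[ℝ] X).comp G.θτ) =
      F.θf.comp ((F.S.symm : X →L[ℝ] X).comp F.θτ) :=
  stmt_14_general F G
end

section
/- Let (f, τ) be a Parseval p-ASF for X and let (g, ω) be a p-ASF similar to (f, τ) via bounded invertible operators T_{f,g}, T_{τ,ω} : X → X (so g_n = f_n ∘ T_{f,g} and ω_n = T_{τ,ω}τ_n for all n). Then (g, ω) is a Parseval p-ASF if and only if T_{τ,ω} ∘ T_{f,g} = I_X, which holds if and only if T_{f,g} ∘ T_{τ,ω} = I_X. -/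
open scoped ENNReal

section FrameOperator

variable {ι R X Y X' Y' : Type*} [Semiring R]
  [AddCommMonoid X] [Module R X] [TopologicalSpace X]
  [AddCommMonoid Y] [Module R Y] [TopologicalSpace Y]

theorem equiv_comp_eq_id_comm (A : Y →L[R] X) (B : X ≃L[R] Y) :
    (B : X →L[R] Y).comp A = ContinuousLinearMap.id R Y ↔
      A.comp (B : X →L[R] Y) = ContinuousLinearMap.id R X := by
  simp only [ContinuousLinearMap.ext_iff, ContinuousLinearMap.comp_apply,
    ContinuousLinearEquiv.coe_coe, ContinuousLinearMap.id_apply]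
  constructor
  · exact fun hBA x => B.injective (hBA (B x))
  · exact fun hAB => B.surjective.forall.2 fun x => congrArg B (hAB x)

variable [TopologicalSpace R]
  [AddCommMonoid X'] [Module R X'] [TopologicalSpace X']
  [AddCommMonoid Y'] [Module R Y'] [TopologicalSpace Y']
  {L : SummationFilter ι} {f : ι → X →L[R] R} {τ : ι → Y}

/-- `S` is the frame operator `x ↦ ∑ n, f n x • τ n` of the pair `(f, τ)`. The functionals and the
vectors may live on different spaces, and the series converges along `L`, so both unconditional
and ordered summation are covered. The pair is Parseval when `S` is the identity. -/
def HasFrameOperator (L : SummationFilter ι) (f : ι → X →L[R] R) (τ : ι → Y) (S : X →L[R] Y) :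
    Prop :=
  ∀ x, HasSum (fun n => f n x • τ n) (S x) L

namespace HasFrameOperator

theorem eq_iff [T2Space Y] [L.NeBot] {S S' : X →L[R] Y} (hS : HasFrameOperator L f τ S) :
    S = S' ↔ HasFrameOperator L f τ S' :=
  ⟨fun h => h ▸ hS, fun hS' => ContinuousLinearMap.ext fun x => (hS x).unique (hS' x)⟩

theorem comp_comp {S : X →L[R] Y} (hS : HasFrameOperator L f τ S)
    (A : X' →L[R] X) (B : Y →L[R] Y') :
    HasFrameOperator L (fun n => (f n).comp A) (fun n => B (τ n)) (B.comp (S.comp A)) := by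
  intro x
  simpa only [map_smul, ContinuousLinearMap.comp_apply] using (hS (A x)).mapL B

end HasFrameOperator

theorem stmt_15_general [T2Space Y] [L.NeBot] {τ : ι → X} {g : ι → Y →L[R] R} {ω : ι → Y}
    (hPar : HasFrameOperator L f τ (ContinuousLinearMap.id R X))
    (A : Y →L[R] X) (B : X ≃L[R] Y)
    (hg : ∀ n, g n = (f n).comp A) (hω : ∀ n, ω n = B (τ n)) :
    (HasFrameOperator L g ω (ContinuousLinearMap.id R Y) ↔
      (B : X →L[R] Y).comp A = ContinuousLinearMap.id R Y) ∧
    (HasFrameOperator L g ω (ContinuousLinearMap.id R Y) ↔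
      A.comp (B : X →L[R] Y) = ContinuousLinearMap.id R X) := by
  have hasFrameOperator_comp : HasFrameOperator L g ω ((B : X →L[R] Y).comp A) := by
    rw [funext hg, funext hω]
    exact hPar.comp_comp A (B : X →L[R] Y)
  have parseval_iff := (hasFrameOperator_comp.eq_iff (S' := ContinuousLinearMap.id R Y)).symm
  exact ⟨parseval_iff, parseval_iff.trans (equiv_comp_eq_id_comm A B)⟩

end FrameOperator

theorem pASF.coe_S_eq_id_iff {p : ℝ≥0∞} [Fact (1 ≤ p)] {X : Type*} [NormedAddCommGroup X]
    [NormedSpace ℝ X] (F : pASF p X) :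
    (F.S : X →L[ℝ] X) = ContinuousLinearMap.id ℝ X ↔
      HasFrameOperator (.unconditional ℕ) F.f F.τ (ContinuousLinearMap.id ℝ X) :=
  HasFrameOperator.eq_iff F.hS

/-- if `(f, τ)` is a Parseval p-ASF and `(g, ω)` is similar to it
via `T_{f,g}, T_{τ,ω}`, then `(g, ω)` is Parseval iff `T_{τ,ω} ∘ T_{f,g} = I_X`
iff `T_{f,g} ∘ T_{τ,ω} = I_X`. -/
theorem stmt_15 {X : Type*} [NormedAddCommGroup X] [NormedSpace ℝ X] [CompleteSpace X]
    (p : ℝ≥0∞) [Fact (1 ≤ p)] (hp : p ≠ ∞) (F G : pASF p X)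
    (hPar : (F.S : X →L[ℝ] X) = ContinuousLinearMap.id ℝ X)
    (Tfg Tτω : X ≃L[ℝ] X)
    (hf : ∀ n, G.f n = (F.f n).comp (Tfg : X →L[ℝ] X))
    (hτ : ∀ n, G.τ n = Tτω (F.τ n)) :
    (((G.S : X →L[ℝ] X) = ContinuousLinearMap.id ℝ X) ↔
      (Tτω : X →L[ℝ] X).comp (Tfg : X →L[ℝ] X) = ContinuousLinearMap.id ℝ X) ∧
    (((G.S : X →L[ℝ] X) = ContinuousLinearMap.id ℝ X) ↔
      (Tfg : X →L[ℝ] X).comp (Tτω : X →L[ℝ] X) = ContinuousLinearMap.id ℝ X) := by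
  rw [G.coe_S_eq_id_iff]
  exact stmt_15_general (F.coe_S_eq_id_iff.1 hPar) Tfg Tτω hf hτ
end

section
/- Let (f, τ) and (g, ω) be two Parseval p-ASFs for X which are orthogonal to each other. If A, B, C, D : X → X are bounded linear operators with C ∘ A + D ∘ B = I_X, then the pair ({f_n ∘ A + g_n ∘ B}_n, {Cτ_n + Dω_n}_n) is a Parseval p-ASF for X. In particular, if scalars a, b, c, d satisfy ca + db = 1, then ({a f_n + b g_n}_n, {c τ_n + d ω_n}_n) is a Parseval p-ASF for X. -/
open scoped ENNReal

/-- `G` is orthogonal to `F`: `0 = ∑ G.f n x • F.τ n = ∑ F.f n x • G.τ n`. -/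
def pASF.IsOrthogonal {p : ℝ≥0∞} [Fact (1 ≤ p)] {X : Type*} [NormedAddCommGroup X]
    [NormedSpace ℝ X] (F G : pASF p X) : Prop :=
  ∀ x : X, HasSum (fun n => G.f n x • F.τ n) (0 : X) ∧
    HasSum (fun n => F.f n x • G.τ n) (0 : X)

/-!
Every p-ASF has frame operator `S = θτ ∘ θf`, and orthogonality says `θτ ∘ θg = 0 = θω ∘ θf`.
The new pair has analysis operator `θf ∘ A + θg ∘ B` and synthesis operator `C ∘ θτ + D ∘ θω`;
when their composite is expanded the two cross terms vanish, which leaves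
`C ∘ S_{f,τ} ∘ A + D ∘ S_{g,ω} ∘ B`.
-/

namespace pASF

variable {p : ℝ≥0∞} [Fact (1 ≤ p)] {X Y Z : Type*} [NormedAddCommGroup X] [NormedSpace ℝ X]
  [NormedAddCommGroup Y] [NormedSpace ℝ Y] [NormedAddCommGroup Z] [NormedSpace ℝ Z]

theorem hasSum_synthesis_analysis (F : pASF p X) (G : pASF p Y) (y : Y) :
    HasSum (fun n => G.f n y • F.τ n) (F.θτ (G.θf y)) := by
  simpa only [G.hθf] using F.hθτ (G.θf y)

theorem synthesis_comp_analysis (F : pASF p X) : F.θτ ∘L F.θf = (F.S : X →L[ℝ] X) :=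
  ContinuousLinearMap.ext fun x => (F.hasSum_synthesis_analysis F x).unique (F.hS x)

theorem interpolated_analysis_apply (F : pASF p X) (G : pASF p Z) (A : Y →L[ℝ] X)
    (B : Y →L[ℝ] Z) (y : Y) (n : ℕ) :
    ((F.θf ∘L A + G.θf ∘L B) y : ℕ → ℝ) n = (F.f n ∘L A + G.f n ∘L B) y := by
  simp [F.hθf, G.hθf]

theorem hasSum_interpolated_synthesis (F : pASF p X) (G : pASF p Z) (C : X →L[ℝ] Y)
    (D : Z →L[ℝ] Y) (a : lp (fun _ : ℕ => ℝ) p) :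
    HasSum (fun n => (a : ℕ → ℝ) n • (C (F.τ n) + D (G.τ n)))
      ((C ∘L F.θτ + D ∘L G.θτ) a) := by
  simpa using (C.hasSum (F.hθτ a)).add (D.hasSum (G.hθτ a))

namespace IsOrthogonal

variable {F G : pASF p X}

theorem symm (h : F.IsOrthogonal G) : G.IsOrthogonal F := fun x => (h x).symm

theorem synthesis_comp_analysis (h : F.IsOrthogonal G) : F.θτ ∘L G.θf = 0 :=
  ContinuousLinearMap.ext fun x => (F.hasSum_synthesis_analysis G x).unique (h x).1

theorem interpolated_synthesis_comp_analysis (h : F.IsOrthogonal G) (A B : Y →L[ℝ] X)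
    (C D : X →L[ℝ] Y) :
    (C ∘L F.θτ + D ∘L G.θτ) ∘L (F.θf ∘L A + G.θf ∘L B) =
      C ∘L (F.S : X →L[ℝ] X) ∘L A + D ∘L (G.S : X →L[ℝ] X) ∘L B := by
  have cross_FG (x : X) : F.θτ (G.θf x) = 0 := DFunLike.congr_fun h.synthesis_comp_analysis x
  have cross_GF (x : X) : G.θτ (F.θf x) = 0 :=
    DFunLike.congr_fun h.symm.synthesis_comp_analysis x
  ext y
  simp [← pASF.synthesis_comp_analysis, cross_FG, cross_GF]

/-- The interpolation of two orthogonal p-ASFs `(f, τ)` and `(g, ω)`: the p-ASF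
`({f n ∘ A + g n ∘ B}, {C (τ n) + D (ω n)})`. Its frame operator is passed as an equivalence `T`,
so that its invertibility is part of the data. -/
noncomputable def interpolation (h : F.IsOrthogonal G) (A B : Y →L[ℝ] X) (C D : X →L[ℝ] Y)
    (T : Y ≃L[ℝ] Y)
    (hT : C ∘L (F.S : X →L[ℝ] X) ∘L A + D ∘L (G.S : X →L[ℝ] X) ∘L B = (T : Y →L[ℝ] Y)) :
    pASF p Y where
  f n := F.f n ∘L A + G.f n ∘L B
  τ n := C (F.τ n) + D (G.τ n)
  S := T
  hS y := by
    have frame_apply : (C ∘L F.θτ + D ∘L G.θτ) ((F.θf ∘L A + G.θf ∘L B) y) = T y :=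
      DFunLike.congr_fun ((h.interpolated_synthesis_comp_analysis A B C D).trans hT) y
    simpa only [interpolated_analysis_apply, frame_apply] using
      hasSum_interpolated_synthesis F G C D ((F.θf ∘L A + G.θf ∘L B) y)
  θf := F.θf ∘L A + G.θf ∘L B
  hθf := interpolated_analysis_apply F G A B
  θτ := C ∘L F.θτ + D ∘L G.θτ
  hθτ := hasSum_interpolated_synthesis F G C D

end IsOrthogonal

end pASF

theorem stmt_17_general {X Y : Type*} [NormedAddCommGroup X] [NormedSpace ℝ X]
    [NormedAddCommGroup Y] [NormedSpace ℝ Y] {p : ℝ≥0∞} [Fact (1 ≤ p)] {F G : pASF p X}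
    (horth : F.IsOrthogonal G) :
    (∀ (A B : Y →L[ℝ] X) (C D : X →L[ℝ] Y) (T : Y ≃L[ℝ] Y),
      C ∘L (F.S : X →L[ℝ] X) ∘L A + D ∘L (G.S : X →L[ℝ] X) ∘L B = (T : Y →L[ℝ] Y) →
      ∃ H : pASF p Y,
        (H.S : Y →L[ℝ] Y) = T ∧
        (∀ n, H.f n = (F.f n).comp A + (G.f n).comp B) ∧
        (∀ n, H.τ n = C (F.τ n) + D (G.τ n))) ∧
    (∀ (a b c d : ℝ) (T : X ≃L[ℝ] X),
      (c * a) • (F.S : X →L[ℝ] X) + (d * b) • (G.S : X →L[ℝ] X) = (T : X →L[ℝ] X) →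
      ∃ H : pASF p X,
        (H.S : X →L[ℝ] X) = T ∧
        (∀ n, H.f n = a • F.f n + b • G.f n) ∧
        (∀ n, H.τ n = c • F.τ n + d • G.τ n)) := by
  refine ⟨fun A B C D T hT => ⟨horth.interpolation A B C D T hT, rfl, fun _ => rfl, fun _ => rfl⟩,
    fun a b c d T hT => ?_⟩
  let I := ContinuousLinearMap.id ℝ X
  have scalar_frame : (c • I) ∘L (F.S : X →L[ℝ] X) ∘L (a • I) +
      (d • I) ∘L (G.S : X →L[ℝ] X) ∘L (b • I) = (T : X →L[ℝ] X) := by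
    simpa [I, smul_smul, mul_comm] using hT
  exact ⟨horth.interpolation (a • I) (b • I) (c • I) (d • I) T scalar_frame, rfl,
    fun n => by simp [pASF.IsOrthogonal.interpolation, I],
    fun n => by simp [pASF.IsOrthogonal.interpolation, I]⟩

/-- interpolation of two orthogonal Parseval p-ASFs: if
`C ∘ A + D ∘ B = I_X` then `({f n ∘ A + g n ∘ B}, {C τ n + D ω n})` is a
Parseval p-ASF; in particular for scalars with `c·a + d·b = 1`,
`({a f n + b g n}, {c τ n + d ω n})` is a Parseval p-ASF. -/
theorem stmt_17 {X : Type*} [NormedAddCommGroup X] [NormedSpace ℝ X] [CompleteSpace X]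
    (p : ℝ≥0∞) [Fact (1 ≤ p)] (hp : p ≠ ∞) (F G : pASF p X)
    (hFPar : (F.S : X →L[ℝ] X) = ContinuousLinearMap.id ℝ X)
    (hGPar : (G.S : X →L[ℝ] X) = ContinuousLinearMap.id ℝ X)
    (horth : F.IsOrthogonal G) :
    (∀ A B C D : X →L[ℝ] X, C.comp A + D.comp B = ContinuousLinearMap.id ℝ X →
      ∃ H : pASF p X,
        (H.S : X →L[ℝ] X) = ContinuousLinearMap.id ℝ X ∧
        (∀ n, H.f n = (F.f n).comp A + (G.f n).comp B) ∧
        (∀ n, H.τ n = C (F.τ n) + D (G.τ n))) ∧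
    (∀ a b c d : ℝ, c * a + d * b = 1 →
      ∃ H : pASF p X,
        (H.S : X →L[ℝ] X) = ContinuousLinearMap.id ℝ X ∧
        (∀ n, H.f n = a • F.f n + b • G.f n) ∧
        (∀ n, H.τ n = c • F.τ n + d • G.τ n)) :=
  ⟨fun A B C D h => (stmt_17_general horth).1 A B C D (.refl ℝ X) (by simpa [hFPar, hGPar]),
    fun a b c d h => (stmt_17_general (Y := X) horth).2 a b c d (.refl ℝ X)
      (by simp [hFPar, hGPar, ← add_smul, h])⟩
end
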